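/- Under the stated setup, given samples z_1,…,z_M ∈ Z, define W(t,x,p,q) = (1/M) Σ_{m=1}^M [∏_{i=1}^L √(a_i(z_m)) e^{−√(a_i(z_m))(p_i+q_i)}] u(t,x,z_m) for p,q ∈ ℝ^L. Then: (i) W satisfies the phase-space Schrödinger equation iħ ∂_t W(t,x,p,q) = −(ħ²/2) Δ_x W(t,x,p,q) + Σ_{i=1}^L b_i(x) ∂_{p_i} ∂_{p_i} W(t,x,p,q) for all (t,x,p,q); and (ii) ∂_{p_i} W(t,x,p,q) − ∂_{q_i} W(t,x,p,q) = 0 for every i and all (t,x,p,q), in particular on the boundary {p_i = 0}; so neither the equation nor the boundary condition depends on the samples z_m. -/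

import Mathlib

open Real MeasureTheory

noncomputable section

/-- Partial derivative of `f` in the `i`-th coordinate at `x`. -/
def pd {ι : Type*} [DecidableEq ι] {E : Type*} [NormedAddCommGroup E] [NormedSpace ℝ E]
    (i : ι) (f : (ι → ℝ) → E) (x : ι → ℝ) : E :=
  deriv (fun s => f (Function.update x i s)) (x i)

/-- Second partial derivative of `f` in the `i`-th coordinate at `x`. -/
def pd2 {ι : Type*} [DecidableEq ι] {E : Type*} [NormedAddCommGroup E] [NormedSpace ℝ E]
    (i : ι) (f : (ι → ℝ) → E) (x : ι → ℝ) : E :=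
  deriv (deriv (fun s => f (Function.update x i s))) (x i)

/-- Laplacian of `f` at `x`. -/
def plap {ι : Type*} [DecidableEq ι] [Fintype ι] {E : Type*} [NormedAddCommGroup E]
    [NormedSpace ℝ E] (f : (ι → ℝ) → E) (x : ι → ℝ) : E :=
  ∑ i, pd2 i f x

theorem deriv_sum_const_mul {κ : Type*} [Fintype κ] (c : κ → ℂ) {f : κ → ℝ → ℂ}
    (hf : ∀ m, Differentiable ℝ (f m)) :
    deriv (fun s => ∑ m, c m * f m s) = fun s => ∑ m, c m * deriv (f m) s := by
  funext s
  exact (HasDerivAt.fun_sum fun m _ => ((hf m s).hasDerivAt.const_mul (c m))).deriv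

theorem pd_sum_const_mul {ι κ : Type*} [DecidableEq ι] [Fintype ι] [Fintype κ] (c : κ → ℂ)
    {f : κ → (ι → ℝ) → ℂ} (hf : ∀ m, ContDiff ℝ 2 (f m)) (i : ι) (x : ι → ℝ) :
    pd i (fun y => ∑ m, c m * f m y) x = ∑ m, c m * pd i (f m) x := by
  have h : ∀ m, Differentiable ℝ (fun s => f m (Function.update x i s)) := fun m =>
    ((hf m).comp (contDiff_update 2 x i)).differentiable (by norm_num)
  simp only [pd, deriv_sum_const_mul c h]

theorem pd2_sum_const_mul {ι κ : Type*} [DecidableEq ι] [Fintype ι] [Fintype κ] (c : κ → ℂ)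
    {f : κ → (ι → ℝ) → ℂ} (hf : ∀ m, ContDiff ℝ 2 (f m)) (i : ι) (x : ι → ℝ) :
    pd2 i (fun y => ∑ m, c m * f m y) x = ∑ m, c m * pd2 i (f m) x := by
  have h : ∀ m, ContDiff ℝ 2 (fun s => f m (Function.update x i s)) := fun m =>
    (hf m).comp (contDiff_update 2 x i)
  have h' : ∀ m, Differentiable ℝ (deriv fun s => f m (Function.update x i s)) := fun m =>
    (h m).differentiable_deriv_two
  simp only [pd2, deriv_sum_const_mul c fun m => (h m).differentiable (by norm_num),
    deriv_sum_const_mul c h']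

theorem plap_sum_const_mul {ι κ : Type*} [DecidableEq ι] [Fintype ι] [Fintype κ] (c : κ → ℂ)
    {f : κ → (ι → ℝ) → ℂ} (hf : ∀ m, ContDiff ℝ 2 (f m)) (x : ι → ℝ) :
    plap (fun y => ∑ m, c m * f m y) x = ∑ m, c m * plap (f m) x := by
  simp only [plap, pd2_sum_const_mul c hf, Finset.mul_sum]
  exact Finset.sum_comm

/-- The exponential weight `∏ i, rᵢ e^{-rᵢ(pᵢ+qᵢ)}`. -/
def expWeight {ι : Type*} [Fintype ι] (r p q : ι → ℝ) : ℂ :=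
  ((∏ i, r i * Real.exp (-r i * (p i + q i)) : ℝ) : ℂ)

theorem expWeight_comm {ι : Type*} [Fintype ι] (r p q : ι → ℝ) :
    expWeight r p q = expWeight r q p := by
  simp only [expWeight, add_comm]

theorem contDiff_expWeight {ι : Type*} [Fintype ι] (r q : ι → ℝ) :
    ContDiff ℝ 2 (fun p => expWeight r p q) := by
  unfold expWeight
  refine Complex.ofRealCLM.contDiff.comp (contDiff_prod fun i _ => ?_)
  fun_prop

theorem expWeight_update {ι : Type*} [DecidableEq ι] [Fintype ι] (r p q : ι → ℝ) (i : ι) (s : ℝ) :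
    expWeight r (Function.update p i s) q
      = expWeight r p q * (Real.exp (-r i * (s - p i)) : ℝ) := by
  have h : ∀ j, r j * Real.exp (-r j * (Function.update p i s j + q j))
      = r j * Real.exp (-r j * (p j + q j))
        * (if j = i then Real.exp (-r i * (s - p i)) else 1) := by
    intro j
    rcases eq_or_ne j i with rfl | hj
    · rw [Function.update_self, if_pos rfl, mul_assoc, ← Real.exp_add]
      ring_nf
    · rw [Function.update_of_ne hj, if_neg hj, mul_one]
  simp only [expWeight, h, Finset.prod_mul_distrib, Finset.prod_ite_eq', Finset.mem_univ, if_true,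
    Complex.ofReal_mul]

theorem deriv_expWeight_update {ι : Type*} [DecidableEq ι] [Fintype ι] (r p q : ι → ℝ) (i : ι) :
    deriv (fun s => expWeight r (Function.update p i s) q)
      = fun s => -(r i : ℂ) * expWeight r (Function.update p i s) q := by
  funext s
  simp only [expWeight_update]
  have h : HasDerivAt (fun s => Real.exp (-r i * (s - p i)))
      (Real.exp (-r i * (s - p i)) * (-r i * 1)) s :=
    (((hasDerivAt_id s).sub_const (p i)).const_mul (-r i)).exp
  rw [(h.ofReal_comp.const_mul (expWeight r p q)).deriv]
  push_cast
  ring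

theorem pd_expWeight {ι : Type*} [DecidableEq ι] [Fintype ι] (r p q : ι → ℝ) (i : ι) :
    pd i (fun p' => expWeight r p' q) p = -(r i : ℂ) * expWeight r p q := by
  simp only [pd, deriv_expWeight_update, Function.update_eq_self]

theorem pd2_expWeight {ι : Type*} [DecidableEq ι] [Fintype ι] (r p q : ι → ℝ) (i : ι) :
    pd2 i (fun p' => expWeight r p' q) p = (r i : ℂ) ^ 2 * expWeight r p q := by
  simp only [pd2, deriv_expWeight_update]
  rw [deriv_const_mul_field, deriv_expWeight_update]
  simp only [Function.update_eq_self]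
  ring

/-- the doubled averaged phase-space transform
`W(t,x,p,q) = (1/M) ∑ₘ (∏ i, √(aᵢ(zₘ)) e^{-√(aᵢ(zₘ))(pᵢ+qᵢ)}) u(t,x,zₘ)` for the
Schrödinger equation with uncertain potential `a(x,z) = ∑ i, aᵢ(z) bᵢ(x)` satisfies
(i) the deterministic phase-space Schrödinger equation
`ihbar ∂ₜW = -(hbar²/2) Δₓ W + ∑ i bᵢ(x) ∂_{pᵢ}∂_{pᵢ} W`, and
(ii) `∂_{pᵢ}W - ∂_{qᵢ}W = 0` for every `i`; neither depends on the samples `zₘ`. -/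
theorem schrodinger_phase_space_doubled
    (d L M : ℕ) (hd : 1 ≤ d) (hL : 1 ≤ L) (hM : 1 ≤ M)
    (hbar : ℝ) (hbar_pos : 0 < hbar)
    (Z : Type*) [Nonempty Z]
    (a : Fin L → Z → ℝ) (ha : ∀ i z, 0 < a i z)
    (b : Fin L → (Fin d → ℝ) → ℝ) (hb : ∀ i, ContDiff ℝ (⊤ : ℕ∞) (b i))
    (u : ℝ → (Fin d → ℝ) → Z → ℂ)
    (hu : ∀ z, ContDiff ℝ (⊤ : ℕ∞) (fun tx : ℝ × (Fin d → ℝ) => u tx.1 tx.2 z))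
    (hSchr : ∀ t x z, Complex.I * (hbar : ℂ) * deriv (fun s => u s x z) t
      = -((hbar : ℂ) ^ 2 / 2) * plap (fun y => u t y z) x
        + ((∑ i, a i z * b i x : ℝ) : ℂ) * u t x z)
    (zs : Fin M → Z)
    (W : ℝ → (Fin d → ℝ) → (Fin L → ℝ) → (Fin L → ℝ) → ℂ)
    (hW : ∀ t x p q, W t x p q = (1 / (M : ℂ)) * ∑ m,
      ((∏ i, Real.sqrt (a i (zs m)) * Real.exp (-Real.sqrt (a i (zs m)) * (p i + q i)) : ℝ) : ℂ)
        * u t x (zs m)) :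
    (∀ t x (p q : Fin L → ℝ),
      Complex.I * (hbar : ℂ) * deriv (fun s => W s x p q) t
        = -((hbar : ℂ) ^ 2 / 2) * plap (fun y => W t y p q) x
          + ∑ i, ((b i x : ℝ) : ℂ) * pd2 i (fun p' => W t x p' q) p)
    ∧ (∀ t x (p q : Fin L → ℝ) (i : Fin L),
        pd i (fun p' => W t x p' q) p - pd i (fun q' => W t x p q') q = 0) := by
  set r : Fin M → Fin L → ℝ := fun m i => Real.sqrt (a i (zs m))
  have hr2 : ∀ m i, (r m i : ℂ) ^ 2 = (a i (zs m) : ℂ) := fun m i => by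
    rw [← Complex.ofReal_pow, Real.sq_sqrt (ha i (zs m)).le]
  have hW' : ∀ t x p q, W t x p q = ∑ m, 1 / (M : ℂ) * expWeight (r m) p q * u t x (zs m) := by
    intro t x p q
    simp only [hW, expWeight, Finset.mul_sum, mul_assoc, r]
  have hWp : ∀ t x p q,
      W t x p q = ∑ m, 1 / (M : ℂ) * u t x (zs m) * expWeight (r m) p q := by
    intro t x p q
    rw [hW']
    exact Finset.sum_congr rfl fun m _ => mul_right_comm _ _ _
  have hux : ∀ t m, ContDiff ℝ 2 (fun y => u t y (zs m)) := fun t m =>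
    ((hu (zs m)).comp (contDiff_prodMk_right t)).of_le (WithTop.coe_le_coe.2 le_top)
  have hut : ∀ x m, Differentiable ℝ (fun s => u s x (zs m)) := fun x m =>
    ((hu (zs m)).comp (contDiff_prodMk_left x)).differentiable (by simp)
  refine ⟨fun t x p q => ?_, fun t x p q i => ?_⟩
  · have hp : ∀ i, pd2 i (fun p' => W t x p' q) p
        = ∑ m, 1 / (M : ℂ) * u t x (zs m) * ((a i (zs m) : ℂ) * expWeight (r m) p q) := by
      intro i
      simp only [hWp, pd2_sum_const_mul _ (fun m => contDiff_expWeight (r m) q), pd2_expWeight,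
        hr2]
    have hsum : ∑ i, ((b i x : ℝ) : ℂ) * pd2 i (fun p' => W t x p' q) p
        = ∑ m, 1 / (M : ℂ) * expWeight (r m) p q
          * (((∑ i, a i (zs m) * b i x : ℝ) : ℂ) * u t x (zs m)) := by
      simp only [hp, Finset.mul_sum, Finset.sum_mul, Complex.ofReal_sum, Complex.ofReal_mul]
      rw [Finset.sum_comm]
      exact Finset.sum_congr rfl fun m _ => Finset.sum_congr rfl fun i _ => by ring
    rw [hsum]
    simp only [hW', plap_sum_const_mul _ (hux t), deriv_sum_const_mul _ (hut x)]
    rw [Finset.mul_sum, Finset.mul_sum, ← Finset.sum_add_distrib]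
    refine Finset.sum_congr rfl fun m _ => ?_
    linear_combination (1 / (M : ℂ) * expWeight (r m) p q) * hSchr t x (zs m)
  · have hq : (fun q' => W t x p q')
        = fun q' => ∑ m, 1 / (M : ℂ) * u t x (zs m) * expWeight (r m) q' p := by
      funext q'
      simp only [hWp, expWeight_comm _ p]
    rw [hq]
    simp only [hWp, pd_sum_const_mul _ (fun m => contDiff_expWeight (r m) _), pd_expWeight,
      expWeight_comm _ p q, sub_self]
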